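/- For every a ∈ [−1,1] and all x, z ∈ [0,1] with x² + z² = 1, one has h((1 + a·x)/2) + h((1 + a·z)/2) ≥ 1 + h((1 + a)/2). Equivalently, the minimum of h((1+a·x)/2) + h((1+a·z)/2) over the arc {(x,z) : x,z ≥ 0, x² + z² = 1} is attained at the endpoints (x,z) = (1,0) or (0,1). -/

import Mathlib

/-!
Write `G(t) = log 2 - H((1 + t)/2)`, with `H` the natural-log binary entropy. The claim is
`G(a x) + G(a z) ≤ G(a)`, which follows by adding the two instances of `G(a x) ≤ x² G(a)`
(`entropy_scale`) and using `x² + z² = 1`. By evenness of `G` one may take `a ≥ 0`. The function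
`a ↦ x² G(a) - G(a x)` vanishes at `0`, and its derivative has the sign of
`x L(a) - L(a x)`, where `L(t) = log(1 + t) - log(1 - t)`. This is nonnegative because the power
series of `L` has nonnegative coefficients and only odd powers (`log_ratio_scale`).
-/

/-- The base-2 binary entropy function `h(p) = -p·log₂ p - (1-p)·log₂(1-p)`. -/
noncomputable def binEnt (p : ℝ) : ℝ := -(p * Real.logb 2 p) - (1 - p) * Real.logb 2 (1 - p)

lemma log_ratio_scale {x a : ℝ} (hx0 : 0 ≤ x) (hx1 : x ≤ 1) (ha0 : 0 ≤ a) (ha1 : a < 1) :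
    Real.log (1 + a * x) - Real.log (1 - a * x)
      ≤ x * (Real.log (1 + a) - Real.log (1 - a)) := by
  have hax : a * x < 1 := by nlinarith
  have hs := Real.hasSum_log_sub_log_of_abs_lt_one (x := a * x)
    (by rwa [abs_of_nonneg (by positivity)])
  have ht := (Real.hasSum_log_sub_log_of_abs_lt_one (x := a)
    (by rwa [abs_of_nonneg ha0])).mul_left x
  refine hasSum_le (fun k => ?_) hs ht
  have hxk : x ^ (2 * k + 1) ≤ x := pow_le_of_le_one hx0 hx1 (by omega)
  calc 2 * (1 / (2 * (k : ℝ) + 1)) * (a * x) ^ (2 * k + 1)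
      = 2 * (1 / (2 * (k : ℝ) + 1)) * a ^ (2 * k + 1) * x ^ (2 * k + 1) := by
        rw [mul_pow]; ring
    _ ≤ 2 * (1 / (2 * (k : ℝ) + 1)) * a ^ (2 * k + 1) * x := by gcongr
    _ = x * (2 * (1 / (2 * (k : ℝ) + 1)) * a ^ (2 * k + 1)) := by ring

lemma hasDerivAt_entropy_line {x a : ℝ} (h0 : -1 < a * x) (h1 : a * x < 1) :
    HasDerivAt (fun t : ℝ => Real.binEntropy ((1 + t * x) / 2))
      (-(x / 2) * (Real.log (1 + a * x) - Real.log (1 - a * x))) a := by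
  have hin : HasDerivAt (fun t : ℝ => (1 + t * x) / 2) (x / 2) a := by
    simpa using (((hasDerivAt_id a).mul_const x).const_add 1).div_const 2
  have h := (Real.hasDerivAt_binEntropy (p := (1 + a * x) / 2) (by linarith)
    (by linarith)).comp a hin
  refine h.congr_deriv ?_
  rw [show 1 - (1 + a * x) / 2 = (1 - a * x) / 2 by ring,
    Real.log_div (by linarith) (by norm_num), Real.log_div (by linarith) (by norm_num)]
  ring

/-- The bound `G(a x) ≤ x² G(a)` for the entropy deficit `G(t) = log 2 - H((1 + t)/2)`. -/
lemma entropy_scale {x a : ℝ} (hx0 : 0 ≤ x) (hx1 : x ≤ 1) (ha0 : 0 ≤ a) (ha1 : a ≤ 1) :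
    Real.log 2 - Real.binEntropy ((1 + a * x) / 2)
      ≤ x ^ 2 * (Real.log 2 - Real.binEntropy ((1 + a) / 2)) := by
  have hmono : MonotoneOn (fun t : ℝ => Real.binEntropy ((1 + t * x) / 2)
      - x ^ 2 * Real.binEntropy ((1 + t * 1) / 2)) (Set.Icc 0 1) := by
    refine monotoneOn_of_hasDerivWithinAt_nonneg
      (f' := fun t => -(x / 2) * (Real.log (1 + t * x) - Real.log (1 - t * x))
        - x ^ 2 * (-(1 / 2) * (Real.log (1 + t * 1) - Real.log (1 - t * 1))))
      (convex_Icc 0 1) (by fun_prop) ?_ ?_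
    · intro t ht
      rw [interior_Icc] at ht
      obtain ⟨ht0, ht1⟩ := ht
      have htx0 : 0 ≤ t * x := by positivity
      have htx1 : t * x < 1 := by nlinarith
      exact ((hasDerivAt_entropy_line (by linarith) htx1).sub
        ((hasDerivAt_entropy_line (by linarith) (by linarith)).const_mul (x ^ 2))).hasDerivWithinAt
    · intro t ht
      rw [interior_Icc] at ht
      have h := mul_nonneg hx0 (sub_nonneg.2 (log_ratio_scale hx0 hx1 ht.1.le ht.2))
      simp only [mul_one]
      nlinarith
  have h := hmono ⟨le_rfl, zero_le_one⟩ ⟨ha0, ha1⟩ ha0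
  have hhalf : Real.binEntropy (1 / 2) = Real.log 2 := by
    rw [one_div]; exact Real.binEntropy_two_inv
  simp only [zero_mul, add_zero, mul_one, hhalf] at h
  linarith

lemma binEnt_eq (p : ℝ) : binEnt p = Real.binEntropy p / Real.log 2 := by
  simp only [binEnt, Real.binEntropy, Real.logb, Real.log_inv]
  ring

lemma binEnt_reflect (t : ℝ) : binEnt ((1 + -t) / 2) = binEnt ((1 + t) / 2) := by
  rw [binEnt_eq, binEnt_eq, ← Real.binEntropy_one_sub]
  congr 2
  ring

lemma binEnt_sum_of_nonneg {a x z : ℝ} (ha0 : 0 ≤ a) (ha1 : a ≤ 1)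
    (hx : x ∈ Set.Icc (0 : ℝ) 1) (hz : z ∈ Set.Icc (0 : ℝ) 1) (hxz : x ^ 2 + z ^ 2 = 1) :
    binEnt ((1 + a * x) / 2) + binEnt ((1 + a * z) / 2) ≥ 1 + binEnt ((1 + a) / 2) := by
  have h1 := entropy_scale hx.1 hx.2 ha0 ha1
  have h2 := entropy_scale hz.1 hz.2 ha0 ha1
  have hl : 0 < Real.log 2 := Real.log_pos (by norm_num)
  rw [binEnt_eq, binEnt_eq, binEnt_eq, ge_iff_le, ← add_div, one_add_div hl.ne',
    div_le_div_iff_of_pos_right hl]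
  have h3 : z ^ 2 = 1 - x ^ 2 := by linarith
  rw [h3] at h2
  linarith

/-- For every `a ∈ [-1,1]` and all `x, z ∈ [0,1]` with `x² + z² = 1`,
`h((1 + a·x)/2) + h((1 + a·z)/2) ≥ 1 + h((1 + a)/2)`. -/
theorem stmt_14 (a : ℝ) (ha : a ∈ Set.Icc (-1 : ℝ) 1)
    (x z : ℝ) (hx : x ∈ Set.Icc (0 : ℝ) 1) (hz : z ∈ Set.Icc (0 : ℝ) 1)
    (hxz : x ^ 2 + z ^ 2 = 1) :
    binEnt ((1 + a * x) / 2) + binEnt ((1 + a * z) / 2) ≥ 1 + binEnt ((1 + a) / 2) := by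
  rcases le_total 0 a with h | h
  · exact binEnt_sum_of_nonneg h ha.2 hx hz hxz
  · have h' := binEnt_sum_of_nonneg (a := -a) (by linarith) (by linarith [ha.1]) hx hz hxz
    simpa only [neg_mul, binEnt_reflect] using h'
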